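/- Fix h ∈ ℝ. Then lim_{n→∞} [ Z_n(1 + h/√n, CW) − Z_n(1, CW) ] = F(h) − F(0), where F(h) := log ∫_ℝ exp(−u⁴/12 + hu²/2) du. -/

import Mathlib

open Filter

noncomputable def spin (b : Bool) : ℝ := if b then 1 else -1

noncomputable def mag (n : ℕ) (x : Fin n → Bool) : ℝ := (∑ i, spin (x i)) / n

/-- Log normalizing constant of the Curie–Weiss model. -/
noncomputable def Zcw (n : ℕ) (θ : ℝ) : ℝ :=
  Real.log (∑ x : Fin n → Bool, Real.exp ((n : ℝ) * θ * mag n x ^ 2 / 2))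

/-- `F(h) = log ∫ exp(-u⁴/12 + h u²/2) du`. -/
noncomputable def Fcrit (h : ℝ) : ℝ :=
  Real.log (∫ u : ℝ, Real.exp (-(u ^ 4) / 12 + h * u ^ 2 / 2))

lemma nonneg_aux (f f' : ℝ → ℝ) (hf : ∀ x, HasDerivAt f (f' x) x) (h0 : f 0 = 0)
    (h' : ∀ x, 0 ≤ x → 0 ≤ f' x) (x : ℝ) (hx : 0 ≤ x) : 0 ≤ f x := by
  have hm : MonotoneOn f (Set.Ici 0) := by
    apply monotoneOn_of_deriv_nonneg (convex_Ici 0)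
    · exact fun y _ => (hf y).continuousAt.continuousWithinAt
    · exact fun y _ => (hf y).differentiableAt.differentiableWithinAt
    · intro y hy
      rw [interior_Ici] at hy
      rw [(hf y).deriv]
      exact h' y hy.le
  have := hm Set.self_mem_Ici (Set.mem_Ici.2 hx) hx
  rwa [h0] at this

lemma hasDerivAt_tanh' (x : ℝ) : HasDerivAt Real.tanh (1 - Real.tanh x ^ 2) x := by
  have hc := (Real.cosh_pos x).ne'
  have := (Real.hasDerivAt_sinh x).div (Real.hasDerivAt_cosh x) hc
  have e : Real.tanh = Real.sinh / Real.cosh := by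
    ext y; simp [Real.tanh_eq_sinh_div_cosh]
  rw [Real.tanh_eq_sinh_div_cosh, e]
  refine this.congr_deriv ?_
  symm
  rw [div_pow, eq_div_iff (by positivity), sub_mul, div_mul_cancel₀ _ (by positivity)]
  ring

lemma hasDerivAt_lc (x : ℝ) : HasDerivAt (fun y => Real.log (Real.cosh y)) (Real.tanh x) x := by
  rw [Real.tanh_eq_sinh_div_cosh]
  exact (Real.hasDerivAt_cosh x).log (Real.cosh_pos x).ne'

lemma tanh_nn (x : ℝ) (hx : 0 ≤ x) : 0 ≤ Real.tanh x := by
  rw [Real.tanh_eq_sinh_div_cosh]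
  exact div_nonneg (Real.sinh_nonneg_iff.2 hx) (Real.cosh_pos x).le

lemma tanh_le (x : ℝ) (hx : 0 ≤ x) : Real.tanh x ≤ x := by
  have := nonneg_aux (fun y => y - Real.tanh y) (fun y => 1 - (1 - Real.tanh y ^ 2))
    (fun y => (hasDerivAt_id y).sub (hasDerivAt_tanh' y)) (by simp)
    (fun y hy => by nlinarith [sq_nonneg (Real.tanh y)]) x hx
  linarith

lemma le_tanh (x : ℝ) (hx : 0 ≤ x) : x - x ^ 3 / 3 ≤ Real.tanh x := by
  have := nonneg_aux (fun y => Real.tanh y - (y - y ^ 3 / 3))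
    (fun y => (1 - Real.tanh y ^ 2) - (1 - (3 * y ^ 2) / 3))
    (fun y => (hasDerivAt_tanh' y).sub ((hasDerivAt_id y).sub
      (by simpa using (hasDerivAt_pow 3 y).div_const 3))) (by simp)
    (fun y hy => by nlinarith [tanh_nn y hy, tanh_le y hy]) x hx
  linarith

lemma tanh_le2 (x : ℝ) (hx : 0 ≤ x) : Real.tanh x ≤ x - x ^ 3 / 3 + 2 * x ^ 5 / 15 := by
  have := nonneg_aux (fun y => (y - y ^ 3 / 3 + 2 * y ^ 5 / 15) - Real.tanh y)
    (fun y => (1 - (3 * y ^ 2) / 3 + 2 * (5 * y ^ 4) / 15) - (1 - Real.tanh y ^ 2))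
    (fun y => (((hasDerivAt_id y).sub
      (by simpa using (hasDerivAt_pow 3 y).div_const 3)).add
      (by simpa using ((hasDerivAt_pow 5 y).const_mul 2).div_const 15)).sub (hasDerivAt_tanh' y))
    (by simp)
    (fun y hy => by
      by_cases h : y ^ 2 ≤ 3
      · have h1 : 0 ≤ y - y ^ 3 / 3 := by nlinarith
        have h2 := pow_le_pow_left₀ h1 (le_tanh y hy) 2
        nlinarith [pow_nonneg hy 6]
      · push Not at h
        nlinarith [sq_nonneg (Real.tanh y), sq_nonneg y]) x hx
  linarith

lemma tanh_ge3 (x : ℝ) (hx : 0 ≤ x) : x / (1 + x) ≤ Real.tanh x := by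
  rw [Real.tanh_eq_sinh_div_cosh, div_le_div_iff₀ (by linarith) (Real.cosh_pos x)]
  have h1 : x ≤ Real.sinh x := Real.self_le_sinh_iff.2 hx
  have h2 : Real.cosh x - Real.sinh x = Real.exp (-x) := Real.cosh_sub_sinh x
  have h3 : Real.exp (-x) ≤ 1 := Real.exp_le_one_iff.2 (by linarith)
  nlinarith

lemma tanh_le3 (x : ℝ) (hx : 0 ≤ x) : Real.tanh x ≤ x - (x - x / (1 + x ^ 2)) / 6 := by
  have := nonneg_aux (fun y => y - (y - y / (1 + y ^ 2)) / 6 - Real.tanh y)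
    (fun y => 1 - (1 - (1 * (1 + y ^ 2) - y * (2 * y)) / (1 + y ^ 2) ^ 2) / 6
      - (1 - Real.tanh y ^ 2))
    (fun y => by
      have h1 : HasDerivAt (fun y : ℝ => 1 + y ^ 2) (2 * y) y := by
        simpa using (hasDerivAt_pow 2 y).const_add 1
      have h2 := (hasDerivAt_id y).div h1 (by positivity)
      exact (((hasDerivAt_id y).sub (((hasDerivAt_id y).sub h2).div_const 6))).sub
        (hasDerivAt_tanh' y))
    (by simp)
    (fun y hy => by
      have h1 := pow_le_pow_left₀ (by positivity) (tanh_ge3 y hy) 2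
      have h2 : y ^ 2 / (2 * (1 + y ^ 2)) ≤ (y / (1 + y)) ^ 2 := by
        rw [div_pow]
        apply div_le_div_of_nonneg_left (by positivity) (by positivity)
        nlinarith [sq_nonneg (1 - y)]
      have h3 : (1 - (1 * (1 + y ^ 2) - y * (2 * y)) / (1 + y ^ 2) ^ 2) / 6 
          ≤ y ^ 2 / (2 * (1 + y ^ 2)) := by
        have : y ^ 2 / (2 * (1 + y ^ 2)) - (1 - (1 * (1 + y ^ 2) - y * (2 * y)) / (1 + y ^ 2) ^ 2) / 6 = y ^ 4 / (3 * (1 + y ^ 2) ^ 2) := by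
          field_simp
          ring
        have h4 : 0 ≤ y ^ 4 / (3 * (1 + y ^ 2) ^ 2) := by positivity
        linarith
      linarith) x hx
  linarith

lemma lc_ge (x : ℝ) : x ^ 2 / 2 - x ^ 4 / 12 ≤ Real.log (Real.cosh x) := by
  wlog hx : 0 ≤ x
  · have := this (-x) (by linarith)
    simpa [Even.neg_pow (by decide : Even 4)] using this
  have := nonneg_aux (fun y => Real.log (Real.cosh y) - (y ^ 2 / 2 - y ^ 4 / 12))
    (fun y => Real.tanh y - ((2 * y) / 2 - (4 * y ^ 3) / 12))
    (fun y => (hasDerivAt_lc y).sub ((show HasDerivAt (fun y : ℝ => y ^ 2 / 2) ((2 * y) / 2) y by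
      simpa using (hasDerivAt_pow 2 y).div_const 2).sub
      (by simpa using (hasDerivAt_pow 4 y).div_const 12))) (by simp)
    (fun y hy => by linarith [le_tanh y hy]) x hx
  linarith

lemma lc_le (x : ℝ) : Real.log (Real.cosh x) ≤ x ^ 2 / 2 - x ^ 4 / 12 + x ^ 6 / 45 := by
  wlog hx : 0 ≤ x
  · have := this (-x) (by linarith)
    simpa [Even.neg_pow (by decide : Even 4), Even.neg_pow (by decide : Even 6)] using this
  have := nonneg_aux (fun y => (y ^ 2 / 2 - y ^ 4 / 12 + y ^ 6 / 45) - Real.log (Real.cosh y))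
    (fun y => ((2 * y) / 2 - (4 * y ^ 3) / 12 + (6 * y ^ 5) / 45) - Real.tanh y)
    (fun y => (((show HasDerivAt (fun y : ℝ => y ^ 2 / 2) ((2 * y) / 2) y by
      simpa using (hasDerivAt_pow 2 y).div_const 2).sub
      (by simpa using (hasDerivAt_pow 4 y).div_const 12)).add
      (by simpa using (hasDerivAt_pow 6 y).div_const 45)).sub (hasDerivAt_lc y)) (by simp)
    (fun y hy => by linarith [tanh_le2 y hy]) x hx
  linarith

lemma lc_le' (x : ℝ) :
    Real.log (Real.cosh x) ≤ x ^ 2 / 2 - (x ^ 2 - Real.log (1 + x ^ 2)) / 12 := by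
  wlog hx : 0 ≤ x
  · have := this (-x) (by linarith)
    simpa using this
  have := nonneg_aux
    (fun y => (y ^ 2 / 2 - (y ^ 2 - Real.log (1 + y ^ 2)) / 12) - Real.log (Real.cosh y))
    (fun y => ((2 * y) / 2 - (2 * y - 2 * y / (1 + y ^ 2)) / 12) - Real.tanh y)
    (fun y => by
      have h1 : HasDerivAt (fun y : ℝ => 1 + y ^ 2) (2 * y) y := by
        simpa using (hasDerivAt_pow 2 y).const_add 1
      have h0 : HasDerivAt (fun y : ℝ => y ^ 2) (2 * y) y := by
        simpa using (hasDerivAt_pow 2 y)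
      exact ((h0.div_const 2).sub ((h0.sub (h1.log (by positivity))).div_const 12)).sub
        (hasDerivAt_lc y)) (by simp)
    (fun y hy => by
      have := tanh_le3 y hy
      have e : 2 * y / (1 + y ^ 2) = 2 * (y / (1 + y ^ 2)) := by ring
      rw [e]
      linarith) x hx
  linarith

lemma lc_dom (x d : ℝ) (hd0 : 0 ≤ d) (hd : d ≤ 1 / 2) :
    Real.log (Real.cosh x) ≤ x ^ 2 / 2 - (d * x ^ 2 - 2 * d ^ 2) / 12 := by
  have h1 := lc_le' x
  have h2 : Real.log (1 + x ^ 2) + Real.log (1 - d) ≤ (1 + x ^ 2) * (1 - d) - 1 := by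
    rw [← Real.log_mul (by positivity) (by linarith)]
    exact Real.log_le_sub_one_of_pos (mul_pos (by positivity) (by linarith))
  have h3 : 1 - (1 - d)⁻¹ ≤ Real.log (1 - d) := Real.one_sub_inv_le_log_of_pos (by linarith)
  have h4 : (1 - d)⁻¹ ≤ 1 + d + 2 * d ^ 2 := by
    rw [inv_le_iff_one_le_mul₀ (by linarith)]
    nlinarith [mul_nonneg (sq_nonneg d) (show 0 ≤ 1 - 2 * d by linarith)]
  nlinarith

lemma gauss (b c : ℝ) (hb : 0 < b) :
    MeasureTheory.Integrable (fun u : ℝ => Real.exp (-b * u ^ 2 + c * u)) ∧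
    ∫ u : ℝ, Real.exp (-b * u ^ 2 + c * u) = Real.sqrt (Real.pi / b) * Real.exp (c ^ 2 / (4 * b)) := by
  have e : (fun u : ℝ => Real.exp (-b * u ^ 2 + c * u)) =
    fun u => Real.exp (-b * (u - c / (2 * b)) ^ 2) * Real.exp (c ^ 2 / (4 * b)) := by
    ext u
    rw [← Real.exp_add]
    congr 1
    field_simp
    ring
  rw [e]
  constructor
  · exact ((integrable_exp_neg_mul_sq hb).comp_sub_right (c / (2 * b))).mul_const _
  · rw [MeasureTheory.integral_mul_const,
      MeasureTheory.integral_sub_right_eq_self (fun u : ℝ => Real.exp (-b * u ^ 2)),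
      integral_gaussian]

lemma sum_spin (n : ℕ) (t : ℝ) :
    ∑ x : Fin n → Bool, Real.exp (t * ∑ i, spin (x i)) = (2 * Real.cosh t) ^ n := by
  have : 2 * Real.cosh t = ∑ b : Bool, Real.exp (t * spin b) := by
    simp [spin, Real.cosh_eq]; ring
  rw [this, Fintype.sum_pow]
  simp [Finset.mul_sum, Real.exp_sum]

lemma hs (n : ℕ) (θ r : ℝ) (hr : 0 < r) (hn : r ^ 4 = n) (hθ : 0 < θ) :
    Real.sqrt (Real.pi / (r ^ 2 / (2 * θ))) *
      ∑ x : Fin n → Bool, Real.exp ((n : ℝ) * θ * mag n x ^ 2 / 2) =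
    2 ^ n * ∫ u : ℝ, Real.exp (-(r ^ 2 / (2 * θ)) * u ^ 2) * Real.cosh (u / r) ^ n := by
  have hb : 0 < r ^ 2 / (2 * θ) := by positivity
  rw [← MeasureTheory.integral_const_mul]
  have e : ∀ u : ℝ, 2 ^ n * (Real.exp (-(r ^ 2 / (2 * θ)) * u ^ 2) * Real.cosh (u / r) ^ n) =
      ∑ x : Fin n → Bool, Real.exp (-(r ^ 2 / (2 * θ)) * u ^ 2 + ((∑ i, spin (x i)) / r) * u) := by
    intro u
    rw [mul_left_comm, ← mul_pow, ← sum_spin, Finset.mul_sum]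
    refine Finset.sum_congr rfl fun x _ => ?_
    rw [← Real.exp_add]
    congr 2
    ring
  simp_rw [e]
  rw [MeasureTheory.integral_finsetSum _ (fun x _ => (gauss _ _ hb).1), Finset.mul_sum]
  refine Finset.sum_congr rfl fun x _ => ?_
  rw [(gauss _ _ hb).2, mag, ← hn]
  congr 2
  field_simp
  try ring

noncomputable def GG (n : ℕ) (θ : ℝ) : ℝ :=
  ∫ u : ℝ, Real.exp (-(√n / (2 * θ)) * u ^ 2) * Real.cosh (u / √√n) ^ n

lemma Z_eq (n : ℕ) (θ : ℝ) (hn : 0 < n) (hθ : 0 < θ) :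
    0 < GG n θ ∧ Zcw n θ = n * Real.log 2 + Real.log (GG n θ) - 
      (Real.log (2 * Real.pi / √n) + Real.log θ) / 2 := by
  have hn' : (0:ℝ) < n := by exact_mod_cast hn
  have h2 : √√(n:ℝ) ^ 2 = √n := Real.sq_sqrt (by positivity)
  have h := hs n θ (√√n) (by positivity) (by
    rw [show √√(n:ℝ) ^ 4 = (√√(n:ℝ) ^ 2) ^ 2 by ring, h2, Real.sq_sqrt hn'.le]) hθ
  rw [h2] at h
  change _ = 2 ^ n * GG n θ at h
  have hS : 0 < ∑ x : Fin n → Bool, Real.exp ((n : ℝ) * θ * mag n x ^ 2 / 2) :=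
    Finset.sum_pos (fun _ _ => Real.exp_pos _) Finset.univ_nonempty
  have hq : 0 < Real.sqrt (Real.pi / (√n / (2 * θ))) := by positivity
  have hG : 0 < GG n θ := by
    have := mul_pos hq hS
    rw [h] at this
    exact pos_of_mul_pos_right this (by positivity)
  refine ⟨hG, ?_⟩
  have hl := congrArg Real.log h
  rw [Real.log_mul hq.ne' hS.ne', Real.log_mul (by positivity) hG.ne', Real.log_pow,
    Real.log_sqrt (by positivity),
    show Real.pi / (√n / (2 * θ)) = (2 * Real.pi / √n) * θ by field_simp,
    Real.log_mul (by positivity) hθ.ne'] at hl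
  unfold Zcw
  linarith

lemma G_lim (h : ℝ) : Tendsto (fun n : ℕ => GG n (1 + h / √n)) atTop
    (nhds (∫ u : ℝ, Real.exp (-(u ^ 4) / 12 + h * u ^ 2 / 2))) := by
  have hs : Tendsto (fun n : ℕ => √(n:ℝ)) atTop atTop :=
    Real.tendsto_sqrt_atTop.comp tendsto_natCast_atTop_atTop
  have ht : Tendsto (fun n : ℕ => 1 + h / √(n:ℝ)) atTop (nhds 1) := by
    simpa using (hs.const_div_atTop h).const_add 1
  have hht : Tendsto (fun n : ℕ => h / (1 + h / √(n:ℝ))) atTop (nhds h) := by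
    have := (tendsto_const_nhds (x := h)).div ht one_ne_zero
    rw [div_one] at this
    exact this
  have hpos : ∀ᶠ n : ℕ in atTop, 0 < 1 + h / √(n:ℝ) := ht.eventually_const_lt one_pos
  have key : ∀ n : ℕ, 0 < n → 0 < 1 + h / √(n:ℝ) → ∀ u : ℝ,
      Real.exp (-(√n / (2 * (1 + h / √(n:ℝ)))) * u ^ 2) * Real.cosh (u / √√n) ^ n =
      Real.exp ((h / (1 + h / √(n:ℝ))) * u ^ 2 / 2 +
        (n * Real.log (Real.cosh (u / √√n)) - √n * u ^ 2 / 2)) := by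
    intro n hn hp u
    have hn' : (0:ℝ) < n := by exact_mod_cast hn
    have hs' : 0 < √(n:ℝ) := by positivity
    conv_lhs => rw [← Real.exp_log (Real.cosh_pos (u / √√n)), ← Real.exp_nat_mul, ← Real.exp_add]
    congr 1
    have : √(n:ℝ) + h ≠ 0 := by
      intro h0
      have : 1 + h / √(n:ℝ) = 0 := by field_simp; linarith
      linarith
    have e : √(n:ℝ) / (2 * (1 + h / √(n:ℝ))) = √n / 2 - (h / (1 + h / √(n:ℝ))) / 2 := by
      field_simp
      ring
    rw [e]
    ring
  have pw : ∀ n : ℕ, 0 < n → ∀ u : ℝ, (u / √√(n:ℝ)) ^ 2 = u ^ 2 / √n ∧ √(n:ℝ) ^ 2 = n := by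
    intro n hn u
    rw [div_pow, Real.sq_sqrt (by positivity), Real.sq_sqrt (by positivity)]
    simp
  set K := |h| + 1 with hK
  have hKpos : 0 < K := by positivity
  unfold GG
  apply MeasureTheory.tendsto_integral_filter_of_dominated_convergence
    (fun u => Real.exp (-(K / 2) * u ^ 2) * Real.exp (24 * K ^ 2))
  · refine Eventually.of_forall fun n => Continuous.aestronglyMeasurable ?_
    fun_prop
  · filter_upwards [hpos, eventually_gt_atTop 0, hs.eventually_ge_atTop (24 * K),
      hht.eventually_lt_const (show h < K by rw [hK]; linarith [le_abs_self h])]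
      with n hp hn hb hlt
    refine Eventually.of_forall fun u => ?_
    rw [key n hn hp u, Real.norm_eq_abs, Real.abs_exp, ← Real.exp_add]
    apply Real.exp_le_exp.2
    have hn' : (0:ℝ) < n := by exact_mod_cast hn
    have hs' : 0 < √(n:ℝ) := by positivity
    have h1 := lc_dom (u / √√n) (12 * K / √n) (by positivity) (by
      rw [div_le_iff₀ hs']; linarith)
    obtain ⟨h2, h3⟩ := pw n hn u
    rw [h2] at h1
    have h4 := mul_le_mul_of_nonneg_left h1 hn'.le
    have h5 : (n:ℝ) * (u ^ 2 / √n / 2 - (12 * K / √n * (u ^ 2 / √n) - 2 * (12 * K / √n) ^ 2) / 12) =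
      √n * u ^ 2 / 2 - K * u ^ 2 + 24 * K ^ 2 := by
      rw [← h3]
      rw [Real.sqrt_sq hs'.le]
      field_simp
      ring
    rw [h5] at h4
    have h6 := mul_le_mul_of_nonneg_right hlt.le (sq_nonneg u)
    linarith
  · exact (integrable_exp_neg_mul_sq (by positivity)).mul_const _
  · refine Eventually.of_forall fun u => ?_
    have L : Tendsto (fun n : ℕ => n * Real.log (Real.cosh (u / √√n)) - √n * u ^ 2 / 2) atTop
        (nhds (-(u ^ 4) / 12)) := by
      have up : Tendsto (fun n : ℕ => -(u ^ 4) / 12 + u ^ 6 / 45 / √(n:ℝ)) atTop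
        (nhds (-(u ^ 4) / 12)) := by
        simpa using (hs.const_div_atTop (u ^ 6 / 45)).const_add (-(u ^ 4) / 12)
      refine tendsto_of_tendsto_of_tendsto_of_le_of_le' tendsto_const_nhds up ?_ ?_
      · filter_upwards [eventually_gt_atTop 0] with n hn
        have hn' : (0:ℝ) < n := by exact_mod_cast hn
        have hs' : 0 < √(n:ℝ) := by positivity
        obtain ⟨h2, h3⟩ := pw n hn u
        have h1 := lc_ge (u / √√n)
        rw [show (u / √√(n:ℝ)) ^ 4 = ((u / √√(n:ℝ)) ^ 2) ^ 2 by ring, h2] at h1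
        have h4 := mul_le_mul_of_nonneg_left h1 hn'.le
        have h5 : (n:ℝ) * (u ^ 2 / √n / 2 - (u ^ 2 / √n) ^ 2 / 12) =
          √n * u ^ 2 / 2 - u ^ 4 / 12 := by
          rw [← h3, Real.sqrt_sq hs'.le]
          field_simp
        linarith
      · filter_upwards [eventually_gt_atTop 0] with n hn
        have hn' : (0:ℝ) < n := by exact_mod_cast hn
        have hs' : 0 < √(n:ℝ) := by positivity
        obtain ⟨h2, h3⟩ := pw n hn u
        have h1 := lc_le (u / √√n)
        rw [show (u / √√(n:ℝ)) ^ 4 = ((u / √√(n:ℝ)) ^ 2) ^ 2 by ring,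
          show (u / √√(n:ℝ)) ^ 6 = ((u / √√(n:ℝ)) ^ 2) ^ 3 by ring, h2] at h1
        have h4 := mul_le_mul_of_nonneg_left h1 hn'.le
        have h5 : (n:ℝ) * (u ^ 2 / √n / 2 - (u ^ 2 / √n) ^ 2 / 12 + (u ^ 2 / √n) ^ 3 / 45) =
          √n * u ^ 2 / 2 - u ^ 4 / 12 + u ^ 6 / 45 / √n := by
          rw [← h3, Real.sqrt_sq hs'.le]
          field_simp
        linarith
    have L2 : Tendsto (fun n : ℕ => Real.exp ((h / (1 + h / √(n:ℝ))) * u ^ 2 / 2 +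
        (n * Real.log (Real.cosh (u / √√n)) - √n * u ^ 2 / 2))) atTop
        (nhds (Real.exp (-(u ^ 4) / 12 + h * u ^ 2 / 2))) := by
      rw [add_comm (-(u ^ 4) / 12)]
      exact (Real.continuous_exp.tendsto _).comp (((hht.mul_const (u ^ 2)).div_const 2).add L)
    refine L2.congr' ?_
    filter_upwards [hpos, eventually_gt_atTop 0] with n hp hn
    exact (key n hn hp u).symm

lemma F_pos (h : ℝ) : 0 < ∫ u : ℝ, Real.exp (-(u ^ 4) / 12 + h * u ^ 2 / 2) := by
  apply MeasureTheory.integral_exp_pos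
  refine MeasureTheory.Integrable.mono'
    ((integrable_exp_neg_mul_sq (b := 1) one_pos).mul_const (Real.exp (12 * (1 + |h|) ^ 2)))
    (Continuous.aestronglyMeasurable (by fun_prop)) (Eventually.of_forall fun u => ?_)
  rw [Real.norm_eq_abs, Real.abs_exp, ← Real.exp_add]
  apply Real.exp_le_exp.2
  have := mul_le_mul_of_nonneg_right (le_abs_self h) (sq_nonneg u)
  nlinarith [sq_nonneg (u ^ 2 - 12 * (1 + |h|)), abs_nonneg h, sq_nonneg u, mul_nonneg (abs_nonneg h) (sq_nonneg u)]

theorem stmt12 (h : ℝ) :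
    Tendsto (fun n : ℕ => Zcw n (1 + h / Real.sqrt (n : ℝ)) - Zcw n 1)
      atTop (nhds (Fcrit h - Fcrit 0)) := by
  have hs : Tendsto (fun n : ℕ => √(n:ℝ)) atTop atTop :=
    Real.tendsto_sqrt_atTop.comp tendsto_natCast_atTop_atTop
  have ht : Tendsto (fun n : ℕ => 1 + h / √(n:ℝ)) atTop (nhds 1) := by
    simpa using (hs.const_div_atTop h).const_add 1
  have hpos : ∀ᶠ n : ℕ in atTop, 0 < 1 + h / √(n:ℝ) := ht.eventually_const_lt one_pos
  have g1 := (G_lim h).log (F_pos h).ne'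
  have g0 := (G_lim 0).log (F_pos 0).ne'
  have gl := (ht.log one_ne_zero).div_const 2
  have := (g1.sub g0).sub gl
  simp only [Real.log_one, zero_div, sub_zero, add_zero] at this
  unfold Fcrit
  simp only [zero_mul, zero_div, add_zero] at this ⊢
  refine this.congr' ?_
  filter_upwards [hpos, eventually_gt_atTop 0] with n hp hn
  rw [(Z_eq n _ hn hp).2, (Z_eq n _ hn one_pos).2, Real.log_one]
  ring
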